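/- Set ⟨z, z̄⟩ = z₁·conj(z₂) + z₂·conj(z₁) and K(z,z) = z₁² + m z₂² with m ∈ ℂ (m may be zero). Let F : ℂ³ → ℝ (coordinates (z₁, z₂, ζ)) be the real polynomial F = ⟨z, z̄⟩ + F₃ + F₄, where F₃ = 2Re( K(z,z)·conj(ζ) + A₁(z)·|ζ|² + A₂·ζ²·conj(ζ) ) and F₄ = 2Re( (P(z,z,z̄) + Q(z,z,z))·conj(ζ) + R(z,z)·conj(ζ)² ) + S(z,z̄)·|ζ|² + T(z,z,z̄,z̄) + 2Re( B₁(z,z)·|ζ|² + B₂(z)·ζ²·conj(ζ) + B₃(z)·ζ·conj(ζ)² ), with A₁, B₂, B₃ complex linear forms in z, A₂ ∈ ℂ, P a form of bidegree (2,1) in (z, z̄), Q and B₁ complex forms in z of degrees 3 and 2, R a complex quadratic form in z, S a real form of bidegree (1,1), and T a real form of bidegree (2,2). Let H(p) be the 3×3 complex Hessian matrix (∂²F/∂ξ_i ∂conj(ξ_j))(p), ξ = (z₁,z₂,ζ), taken with Wirtinger derivatives. If every homogeneous Taylor component of det H at 0 of degree ≤ 2 vanishes, then A₁ = 0, A₂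 = 0, B₁ = 0, B₂ = 0, B₃ = 0, and S(z,z̄) = 4( conj(m)·z₁·conj(z₂) + m·z₂·conj(z₁) ). -/

import Mathlib

open Complex ComplexConjugate Filter Topology

/-- The polarization `𝔽(ξ, η)` of the real polynomial
`F = ⟨z,z̄⟩ + F₃ + F₄` of Lemma 8 (null-pair case: Hermitian form `z₁ z̄₂ + z₂ z̄₁`,
`K = z₁² + m z₂²` with `m ∈ ℂ`), so that `F p = 𝔽 (p, conj p)`.  Here `ξ = (z₁, z₂, ζ)`
and `η` stands for `(z̄₁, z̄₂, ζ̄)`; `𝔽` is holomorphic (polynomial) in each argument. -/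
noncomputable def Fc (m : ℂ) (A1 : Fin 2 → ℂ) (A2 : ℂ)
    (P Q : Fin 2 → Fin 2 → Fin 2 → ℂ) (R : Fin 2 → Fin 2 → ℂ)
    (S : Matrix (Fin 2) (Fin 2) ℂ) (T : Fin 2 → Fin 2 → Fin 2 → Fin 2 → ℂ)
    (B1 : Fin 2 → Fin 2 → ℂ) (B2 B3 : Fin 2 → ℂ)
    (ξ η : Fin 3 → ℂ) : ℂ :=
  -- ⟨z, z̄⟩ = z₁ z̄₂ + z₂ z̄₁
  ξ 0 * η 1 + ξ 1 * η 0
  -- 2 Re (K(z,z) ζ̄)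
  + ((ξ 0 ^ 2 + m * ξ 1 ^ 2) * η 2
      + (η 0 ^ 2 + conj m * η 1 ^ 2) * ξ 2)
  -- 2 Re (A₁(z) |ζ|²)
  + ((∑ i, A1 i * ξ i.castSucc) * ξ 2 * η 2
      + (∑ i, conj (A1 i) * η i.castSucc) * η 2 * ξ 2)
  -- 2 Re (A₂ ζ² ζ̄)
  + (A2 * ξ 2 ^ 2 * η 2 + conj A2 * η 2 ^ 2 * ξ 2)
  -- 2 Re (P(z,z,z̄) ζ̄)
  + ((∑ i, ∑ j, ∑ l, P i j l * ξ i.castSucc * ξ j.castSucc * η l.castSucc) * η 2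
      + (∑ i, ∑ j, ∑ l, conj (P i j l) * η i.castSucc * η j.castSucc * ξ l.castSucc) * ξ 2)
  -- 2 Re (Q(z,z,z) ζ̄)
  + ((∑ i, ∑ j, ∑ l, Q i j l * ξ i.castSucc * ξ j.castSucc * ξ l.castSucc) * η 2
      + (∑ i, ∑ j, ∑ l, conj (Q i j l) * η i.castSucc * η j.castSucc * η l.castSucc) * ξ 2)
  -- 2 Re (R(z,z) ζ̄²)
  + ((∑ i, ∑ j, R i j * ξ i.castSucc * ξ j.castSucc) * η 2 ^ 2
      + (∑ i, ∑ j, conj (R i j) * η i.castSucc * η j.castSucc) * ξ 2 ^ 2)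
  -- S(z,z̄) |ζ|²
  + (∑ i, ∑ j, S i j * ξ i.castSucc * η j.castSucc) * ξ 2 * η 2
  -- T(z,z,z̄,z̄)
  + (∑ i, ∑ j, ∑ l, ∑ o, T i j l o * ξ i.castSucc * ξ j.castSucc * η l.castSucc * η o.castSucc)
  -- 2 Re (B₁(z,z) |ζ|²)
  + ((∑ i, ∑ j, B1 i j * ξ i.castSucc * ξ j.castSucc) * ξ 2 * η 2
      + (∑ i, ∑ j, conj (B1 i j) * η i.castSucc * η j.castSucc) * η 2 * ξ 2)
  -- 2 Re (B₂(z) ζ² ζ̄)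
  + ((∑ i, B2 i * ξ i.castSucc) * ξ 2 ^ 2 * η 2
      + (∑ i, conj (B2 i) * η i.castSucc) * η 2 ^ 2 * ξ 2)
  -- 2 Re (B₃(z) ζ ζ̄²)
  + ((∑ i, B3 i * ξ i.castSucc) * ξ 2 * η 2 ^ 2
      + (∑ i, conj (B3 i) * η i.castSucc) * η 2 * ξ 2 ^ 2)

/-- The complex (Wirtinger) Hessian `(∂²F/∂ξᵢ∂ξ̄ⱼ)(p)` of the real function
`F p = 𝔽 (p, conj p)`, computed through the polarization `𝔽`. -/
noncomputable def wirtHess (𝔽 : (Fin 3 → ℂ) → (Fin 3 → ℂ) → ℂ) (p : Fin 3 → ℂ) :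
    Matrix (Fin 3) (Fin 3) ℂ :=
  Matrix.of fun i j =>
    deriv (fun t : ℂ =>
      deriv (fun s : ℂ =>
          𝔽 (Function.update p i t) (Function.update (fun l => conj (p l)) j s))
        (conj (p j))) (p i)

/-!
Write `F = F₂ + F₃ + F₄` with `Fₖ` homogeneous of degree `k`. Along a real line through the origin
the Hessian is `H₂ + t H₃ + t² H₄`, where `H₂` is the invertible block of `⟨z, z̄⟩` bordered by
zeros. Since the last row and the last column of the Hessian are divisible by `t` in turn, its
determinant is `O(t³)` only if the corner `∂²F₃/∂ζ∂ζ̄` vanishes and the corner of `H₄` equals the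
Schur complement term formed from `H₂` and the last row and column of `H₃`. Both are polynomial
identities in `(p, p̄)`, so they persist when `p` and `p̄` are replaced by independent vectors `ξ`
and `η`, and the vanishing forms can then be read off at special values of `(ξ, η)`.
-/

section BorderedDeterminant

open Matrix

variable {R n o : Type*} [CommRing R] [Fintype n] [DecidableEq n] [Fintype o] [DecidableEq o]

theorem det_fromBlocks_smul_row (A : Matrix n n R) (B : Matrix n o R) (C : Matrix o n R)
    (D : Matrix o o R) (c : R) :
    (fromBlocks A B (c • C) (c • D)).det = c ^ Fintype.card o * (fromBlocks A B C D).det := by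
  have h : fromBlocks A B (c • C) (c • D) = fromBlocks 1 0 0 (c • 1) * fromBlocks A B C D := by
    simp [fromBlocks_multiply]
  simp [h]

theorem det_fromBlocks_smul_col (A : Matrix n n R) (B : Matrix n o R) (C : Matrix o n R)
    (D : Matrix o o R) (c : R) :
    (fromBlocks A (c • B) C (c • D)).det = c ^ Fintype.card o * (fromBlocks A B C D).det := by
  have h : fromBlocks A (c • B) C (c • D) = fromBlocks A B C D * fromBlocks 1 0 0 (c • 1) := by
    simp [fromBlocks_multiply]
  simp [h, mul_comm]

theorem det_fromBlocks_add_smul_add_sq_smul (J A A' : Matrix n n R) (B B' : Matrix n o R)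
    (C C' : Matrix o n R) (D D' : Matrix o o R) (x : R) :
    (fromBlocks J 0 0 0 + x • fromBlocks A B C D + x ^ 2 • fromBlocks A' B' C' D').det =
      x ^ Fintype.card o *
        (fromBlocks (J + x • A + x ^ 2 • A') (x • (B + x • B')) (C + x • C') (D + x • D')).det := by
  rw [← det_fromBlocks_smul_row]
  simp [fromBlocks_smul, fromBlocks_add, smul_smul, pow_two]

theorem det_fromBlocks_antidiagonal (B : Matrix (Fin 2) (Fin 1) R)
    (C : Matrix (Fin 1) (Fin 2) R) (D : Matrix (Fin 1) (Fin 1) R) :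
    (fromBlocks !![0, 1; 1, 0] B C D).det = B 0 0 * C 0 1 + B 1 0 * C 0 0 - D 0 0 := by
  rw [← det_submatrix_equiv_self finSumFinEquiv.symm, det_fin_three]
  have inl_zero : finSumFinEquiv.symm (0 : Fin (2 + 1)) = .inl 0 := rfl
  have inl_one : finSumFinEquiv.symm (1 : Fin (2 + 1)) = .inl 1 := rfl
  have inr_zero : finSumFinEquiv.symm (2 : Fin (2 + 1)) = .inr 0 := rfl
  simp [inl_zero, inl_one, inr_zero]
  ring

variable {𝕜 α : Type*} [Field 𝕜] [TopologicalSpace 𝕜] [IsTopologicalRing 𝕜] [T2Space 𝕜]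
  {l : Filter α} [l.NeBot] {ε : α → 𝕜}

theorem toBlocks₂₂_eq_zero_and_det_eq_zero_of_tendsto [Unique o] (hε : Tendsto ε l (𝓝[≠] 0))
    {J : Matrix n n 𝕜} (hJ : J.det ≠ 0) {N N' : Matrix (n ⊕ o) (n ⊕ o) 𝕜}
    (h : Tendsto (fun a => (fromBlocks J 0 0 0 + ε a • N + ε a ^ 2 • N').det / ε a ^ 2) l (𝓝 0)) :
    N.toBlocks₂₂ = 0 ∧ (fromBlocks J N.toBlocks₁₂ N.toBlocks₂₁ N'.toBlocks₂₂).det = 0 := by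
  obtain ⟨A, B, C, D, rfl⟩ : ∃ A B C D, N = fromBlocks A B C D :=
    ⟨_, _, _, _, N.fromBlocks_toBlocks.symm⟩
  obtain ⟨A', B', C', D', rfl⟩ : ∃ A' B' C' D', N' = fromBlocks A' B' C' D' :=
    ⟨_, _, _, _, N'.fromBlocks_toBlocks.symm⟩
  have hε₀ : Tendsto ε l (𝓝 0) := tendsto_nhds_of_tendsto_nhdsWithin hε
  have hε_ne : ∀ᶠ a in l, ε a ≠ 0 := hε self_mem_nhdsWithin
  simp only [det_fromBlocks_add_smul_add_sq_smul, Fintype.card_unique, pow_one] at h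
  have hD : D = 0 := by
    let f (x : 𝕜) : 𝕜 :=
      (fromBlocks (J + x • A + x ^ 2 • A') (x • (B + x • B')) (C + x • C') (D + x • D')).det
    have hf : Continuous f := by fun_prop
    have f_zero : f 0 = 0 := by
      refine tendsto_nhds_unique ((hf.tendsto 0).comp hε₀) ?_
      rw [← mul_zero 0]
      refine (hε₀.mul h).congr' ?_
      filter_upwards [hε_ne] with a ha
      simp only [f, Function.comp_apply]
      field_simp
    ext i j
    simpa [f, hJ, det_unique, Subsingleton.elim _ (default : o)] using f_zero
  let g (x : 𝕜) : 𝕜 :=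
    (fromBlocks (J + x • A + x ^ 2 • A') (B + x • B') (C + x • C') D').det
  have hg : Continuous g := by fun_prop
  have g_zero : g 0 = 0 := by
    refine tendsto_nhds_unique ((hg.tendsto 0).comp hε₀) (h.congr' ?_)
    filter_upwards [hε_ne] with a ha
    simp only [hD, zero_add, det_fromBlocks_smul_col, Fintype.card_unique, pow_one, g,
      Function.comp_apply]
    field_simp
  exact ⟨by simpa using hD, by simpa [g] using g_zero⟩

theorem corner_eq_zero_and_corner_eq_of_tendsto (hε : Tendsto ε l (𝓝[≠] 0))
    {N N' : Matrix (Fin 3) (Fin 3) 𝕜}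
    (h : Tendsto (fun a => (!![0, 1, 0; 1, 0, 0; 0, 0, 0] + ε a • N + ε a ^ 2 • N').det / ε a ^ 2)
      l (𝓝 0)) :
    N 2 2 = 0 ∧ N' 2 2 = N 0 2 * N 2 1 + N 1 2 * N 2 0 := by
  let e : Fin 2 ⊕ Fin 1 ≃ Fin 3 := finSumFinEquiv
  have submatrix_eq : (!![0, 1, 0; 1, 0, 0; 0, 0, 0] : Matrix (Fin 3) (Fin 3) 𝕜).submatrix e e =
      fromBlocks !![0, 1; 1, 0] 0 0 0 := by
    ext i j
    fin_cases i <;> fin_cases j <;> rfl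
  have blocks := toBlocks₂₂_eq_zero_and_det_eq_zero_of_tendsto (J := !![0, 1; 1, 0])
    (N := N.submatrix e e) (N' := N'.submatrix e e) hε (by simp)
    (h.congr fun a => by rw [← det_submatrix_equiv_self e, ← submatrix_eq]; rfl)
  rw [det_fromBlocks_antidiagonal, sub_eq_zero] at blocks
  exact ⟨congr_fun₂ blocks.1 0 0, blocks.2.symm⟩

end BorderedDeterminant

section Polarization

theorem tendsto_ofReal_nhdsNE_zero : Tendsto ofReal (𝓝[≠] 0) (𝓝[≠] 0) := by
  rw [← ofReal_zero]
  exact (ofRealCLM.hasDerivAt (x := 0)).tendsto_nhdsNE (by simp)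

theorem eq_zero_of_forall_conj {ι : Type*} [Finite ι] {G : (ι → ℂ) → (ι → ℂ) → ℂ}
    (hG : Differentiable ℂ (Function.uncurry G)) (h : ∀ p, G p (fun l => conj (p l)) = 0)
    (ξ η : ι → ℂ) : G ξ η = 0 := by
  have := Fintype.ofFinite ι
  -- The line `s ↦ (α + s β, ᾱ + s β̄)` consists of pairs `(p, p̄)` for real `s` and reaches
  -- `(ξ, η)` at `s = I`.
  let α : ι → ℂ := fun l => (ξ l + conj (η l)) / 2
  let β : ι → ℂ := fun l => (ξ l - conj (η l)) / (2 * I)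
  let g : ℂ → ℂ := fun s => G (fun l => α l + s * β l) (fun l => conj (α l) + s * conj (β l))
  have g_analytic : AnalyticOnNhd ℂ g Set.univ := by
    have hg : Differentiable ℂ g := hG.comp (f := fun s : ℂ =>
      ((fun l => α l + s * β l : ι → ℂ), (fun l => conj (α l) + s * conj (β l) : ι → ℂ)))
      (by fun_prop)
    exact hg.differentiableOn.analyticOnNhd isOpen_univ
  have g_real (r : ℝ) : g r = 0 := by simpa [g] using h fun l => α l + r * β l
  have g_frequently : ∃ᶠ s in 𝓝[≠] (0 : ℂ), g s = 0 :=
    tendsto_ofReal_nhdsNE_zero.frequently (Eventually.of_forall g_real).frequently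
  have g_I : g I = 0 := by
    rw [g_analytic.eq_of_frequently_eq (analyticOnNhd_const (v := 0)) g_frequently]
  have hξ : (fun l => α l + I * β l) = ξ := by
    ext l
    simp only [α, β]
    field_simp
    ring
  have hη : (fun l => conj (α l) + I * conj (β l)) = η := by
    ext l
    simp only [α, β, map_div₀, map_add, map_sub, map_mul, conj_I, conj_conj, Complex.conj_ofNat]
    field_simp
    ring
  simpa [g, hξ, hη] using g_I

end Polarization

section MixedHessian

open Function

/-- The matrix of mixed derivatives `∂²𝔽/∂ξᵢ∂ηⱼ` of a function of two vectors. For the polarization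
`𝔽` of `F` its value at `η = ξ̄` is the complex Hessian of `F`; keeping `ξ` and `η` independent
makes it holomorphic. -/
noncomputable def mixedHess {𝕜 ι : Type*} [NontriviallyNormedField 𝕜] [DecidableEq ι]
    (𝔽 : (ι → 𝕜) → (ι → 𝕜) → 𝕜) (ξ η : ι → 𝕜) : Matrix ι ι 𝕜 :=
  Matrix.of fun i j =>
    deriv (fun t => deriv (fun s => 𝔽 (update ξ i t) (update η j s)) (η j)) (ξ i)

variable {𝕜 ι : Type*} [NontriviallyNormedField 𝕜] [DecidableEq ι]
  {𝔽 𝔾 : (ι → 𝕜) → (ι → 𝕜) → 𝕜}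

theorem deriv_mul_of_comp_mul {f g : 𝕜 → 𝕜} {c : 𝕜} (hc : c ≠ 0) {n : ℕ}
    (h : ∀ t, g (c * t) = c ^ (n + 1) * f t) (x : 𝕜) :
    deriv g (c * x) = c ^ n * deriv f x := by
  have hderiv := deriv_comp_mul_left c g x
  simp only [h, deriv_const_mul_field, smul_eq_mul] at hderiv
  apply mul_left_cancel₀ hc
  rw [← hderiv, pow_succ']
  ring

theorem mixedHess_smul_smul {k : ℕ} {c : 𝕜} (hc : c ≠ 0)
    (h𝔽 : ∀ ξ η, 𝔽 (c • ξ) (c • η) = c ^ (k + 2) * 𝔽 ξ η) (ξ η : ι → 𝕜) :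
    mixedHess 𝔽 (c • ξ) (c • η) = c ^ k • mixedHess 𝔽 ξ η := by
  ext i j
  refine deriv_mul_of_comp_mul (n := k)
    (g := fun t => deriv (fun s => 𝔽 (update (c • ξ) i t) (update (c • η) j s)) (c * η j))
    hc (fun t => deriv_mul_of_comp_mul hc (fun s => ?_) (η j)) (ξ i)
  have smul_update (ξ : ι → 𝕜) (i : ι) (t : 𝕜) :
      update (c • ξ) i (c * t) = c • update ξ i t := update_smul c ξ i t
  rw [smul_update, smul_update]
  exact h𝔽 _ _

theorem differentiable_mixedPartial [Fintype ι] (h𝔽 : ContDiff 𝕜 2 (uncurry 𝔽)) (ξ η : ι → 𝕜)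
    (i j : ι) :
    Differentiable 𝕜 fun t => deriv (fun s => 𝔽 (update ξ i t) (update η j s)) (η j) := by
  have h : ContDiff 𝕜 2 (uncurry fun t s => 𝔽 (update ξ i t) (update η j s)) :=
    h𝔽.comp (((contDiff_update 2 ξ i).comp contDiff_fst).prodMk
      ((contDiff_update 2 η j).comp contDiff_snd))
  exact (h.fderiv_apply (n := 1) contDiff_const contDiff_const le_rfl).differentiable one_ne_zero

theorem mixedHess_add [Fintype ι] (h𝔽 : ContDiff 𝕜 2 (uncurry 𝔽))
    (h𝔾 : ContDiff 𝕜 2 (uncurry 𝔾)) (ξ η : ι → 𝕜) :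
    mixedHess (𝔽 + 𝔾) ξ η = mixedHess 𝔽 ξ η + mixedHess 𝔾 ξ η := by
  ext i j
  have differentiable_snd {𝔽 : (ι → 𝕜) → (ι → 𝕜) → 𝕜} (h𝔽 : ContDiff 𝕜 2 (uncurry 𝔽))
      (ξ : ι → 𝕜) : DifferentiableAt 𝕜 (fun s => 𝔽 ξ (update η j s)) (η j) :=
    (h𝔽.comp (contDiff_const.prodMk (contDiff_update 2 η j))).differentiable two_ne_zero _
  simp only [mixedHess, Matrix.of_apply, Matrix.add_apply, Pi.add_apply]
  rw [← deriv_fun_add (differentiable_mixedPartial h𝔽 ξ η i j _)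
    (differentiable_mixedPartial h𝔾 ξ η i j _)]
  simp only [deriv_fun_add (differentiable_snd h𝔽 _) (differentiable_snd h𝔾 _)]

theorem mixedHess_apply_of_mixed_difference [Finite ι] {ξ η : ι → 𝕜} {i j : ι} {c₁ c₂ c₃ : 𝕜}
    (h𝔽 : Differentiable 𝕜 (uncurry 𝔽))
    (h : ∀ t s, 𝔽 (update ξ i t) (update η j s) - 𝔽 (update ξ i t) (update η j 0)
        - 𝔽 (update ξ i 0) (update η j s) + 𝔽 (update ξ i 0) (update η j 0)
      = t * s * (c₁ + c₂ * t + c₃ * s)) :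
    mixedHess 𝔽 ξ η i j = c₁ + 2 * c₂ * ξ i + 2 * c₃ * η j := by
  have := Fintype.ofFinite ι
  have hd : Differentiable 𝕜 fun s => 𝔽 (update ξ i 0) (update η j s) :=
    h𝔽.comp ((differentiable_const _).prodMk ((contDiff_update 1 η j).differentiable one_ne_zero))
  let a (t : 𝕜) := 𝔽 (update ξ i t) (update η j 0) - 𝔽 (update ξ i 0) (update η j 0)
  let b (s : 𝕜) := 𝔽 (update ξ i 0) (update η j s)
  have expansion (t : 𝕜) : (fun s => 𝔽 (update ξ i t) (update η j s)) =
      fun s => a t + b s + ((c₁ * t + c₂ * t ^ 2) * s + c₃ * t * s ^ 2) := by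
    funext s
    linear_combination h t s
  have inner (t : 𝕜) : deriv (fun s => 𝔽 (update ξ i t) (update η j s)) (η j) =
      deriv b (η j) + ((c₁ + 2 * c₃ * η j) * t + c₂ * t ^ 2) := by
    rw [expansion]
    refine HasDerivAt.deriv ?_
    convert (hd.differentiableAt.hasDerivAt.const_add (a t)).fun_add
      (((hasDerivAt_id' (η j)).const_mul (c₁ * t + c₂ * t ^ 2)).fun_add
        ((hasDerivAt_pow 2 (η j)).const_mul (c₃ * t))) using 1
    push_cast
    ring
  simp only [mixedHess, Matrix.of_apply, inner]
  refine HasDerivAt.deriv ?_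
  convert (((hasDerivAt_id' (ξ i)).const_mul (c₁ + 2 * c₃ * η j)).fun_add
    ((hasDerivAt_pow 2 (ξ i)).const_mul c₂)).const_add (deriv b (η j)) using 1
  push_cast
  ring

theorem mixedHess_add_add_smul_smul [Fintype ι] {𝔽₂ 𝔽₃ 𝔽₄ : (ι → 𝕜) → (ι → 𝕜) → 𝕜} {c : 𝕜}
    (hc : c ≠ 0)
    (h𝔽₂ : ContDiff 𝕜 2 (uncurry 𝔽₂)) (h𝔽₃ : ContDiff 𝕜 2 (uncurry 𝔽₃))
    (h𝔽₄ : ContDiff 𝕜 2 (uncurry 𝔽₄))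
    (smul₂ : ∀ ξ η, 𝔽₂ (c • ξ) (c • η) = c ^ 2 * 𝔽₂ ξ η)
    (smul₃ : ∀ ξ η, 𝔽₃ (c • ξ) (c • η) = c ^ 3 * 𝔽₃ ξ η)
    (smul₄ : ∀ ξ η, 𝔽₄ (c • ξ) (c • η) = c ^ 4 * 𝔽₄ ξ η) (ξ η : ι → 𝕜) :
    mixedHess (𝔽₂ + 𝔽₃ + 𝔽₄) (c • ξ) (c • η) =
      mixedHess 𝔽₂ ξ η + c • mixedHess 𝔽₃ ξ η + c ^ 2 • mixedHess 𝔽₄ ξ η := by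
  rw [mixedHess_add (h𝔽₂.add h𝔽₃) h𝔽₄, mixedHess_add h𝔽₂ h𝔽₃, mixedHess_smul_smul hc smul₂,
    mixedHess_smul_smul hc smul₃, mixedHess_smul_smul hc smul₄, pow_zero, one_smul, pow_one]

end MixedHessian

section NullPair

open Function

variable {m : ℂ} {A1 : Fin 2 → ℂ} {A2 : ℂ} {P Q : Fin 2 → Fin 2 → Fin 2 → ℂ}
  {R : Fin 2 → Fin 2 → ℂ} {S : Matrix (Fin 2) (Fin 2) ℂ} {T : Fin 2 → Fin 2 → Fin 2 → Fin 2 → ℂ}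
  {B1 : Fin 2 → Fin 2 → ℂ} {B2 B3 : Fin 2 → ℂ}

/-- The polarization of `⟨z, z̄⟩`. -/
def quadraticPart (ξ η : Fin 3 → ℂ) : ℂ := ξ 0 * η 1 + ξ 1 * η 0

/-- The polarization of `F₃`, as the degree-three terms of `Fc`. -/
noncomputable def cubicPart (m : ℂ) (A1 : Fin 2 → ℂ) (A2 : ℂ) (ξ η : Fin 3 → ℂ) : ℂ :=
  (ξ 0 ^ 2 + m * ξ 1 ^ 2) * η 2 + (η 0 ^ 2 + conj m * η 1 ^ 2) * ξ 2
  + ((∑ i, A1 i * ξ i.castSucc) * ξ 2 * η 2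
      + (∑ i, conj (A1 i) * η i.castSucc) * η 2 * ξ 2)
  + (A2 * ξ 2 ^ 2 * η 2 + conj A2 * η 2 ^ 2 * ξ 2)

/-- The polarization of `F₄`, as the degree-four terms of `Fc`. -/
noncomputable def quarticPart (P Q : Fin 2 → Fin 2 → Fin 2 → ℂ) (R : Fin 2 → Fin 2 → ℂ)
    (S : Matrix (Fin 2) (Fin 2) ℂ) (T : Fin 2 → Fin 2 → Fin 2 → Fin 2 → ℂ)
    (B1 : Fin 2 → Fin 2 → ℂ) (B2 B3 : Fin 2 → ℂ) (ξ η : Fin 3 → ℂ) : ℂ :=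
  (∑ i, ∑ j, ∑ l, P i j l * ξ i.castSucc * ξ j.castSucc * η l.castSucc) * η 2
  + (∑ i, ∑ j, ∑ l, conj (P i j l) * η i.castSucc * η j.castSucc * ξ l.castSucc) * ξ 2
  + ((∑ i, ∑ j, ∑ l, Q i j l * ξ i.castSucc * ξ j.castSucc * ξ l.castSucc) * η 2
      + (∑ i, ∑ j, ∑ l, conj (Q i j l) * η i.castSucc * η j.castSucc * η l.castSucc) * ξ 2)
  + ((∑ i, ∑ j, R i j * ξ i.castSucc * ξ j.castSucc) * η 2 ^ 2
      + (∑ i, ∑ j, conj (R i j) * η i.castSucc * η j.castSucc) * ξ 2 ^ 2)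
  + (∑ i, ∑ j, S i j * ξ i.castSucc * η j.castSucc) * ξ 2 * η 2
  + (∑ i, ∑ j, ∑ l, ∑ o, T i j l o * ξ i.castSucc * ξ j.castSucc * η l.castSucc * η o.castSucc)
  + ((∑ i, ∑ j, B1 i j * ξ i.castSucc * ξ j.castSucc) * ξ 2 * η 2
      + (∑ i, ∑ j, conj (B1 i j) * η i.castSucc * η j.castSucc) * η 2 * ξ 2)
  + ((∑ i, B2 i * ξ i.castSucc) * ξ 2 ^ 2 * η 2
      + (∑ i, conj (B2 i) * η i.castSucc) * η 2 ^ 2 * ξ 2)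
  + ((∑ i, B3 i * ξ i.castSucc) * ξ 2 * η 2 ^ 2
      + (∑ i, conj (B3 i) * η i.castSucc) * η 2 * ξ 2 ^ 2)

theorem Fc_eq_add : Fc m A1 A2 P Q R S T B1 B2 B3 =
    quadraticPart + cubicPart m A1 A2 + quarticPart P Q R S T B1 B2 B3 := by
  ext ξ η
  simp only [Fc, quadraticPart, cubicPart, quarticPart, Pi.add_apply]
  ring

theorem contDiff_quadraticPart : ContDiff ℂ 2 (uncurry quadraticPart) := by
  unfold uncurry quadraticPart
  fun_prop

theorem contDiff_cubicPart : ContDiff ℂ 2 (uncurry (cubicPart m A1 A2)) := by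
  unfold uncurry cubicPart
  fun_prop

theorem contDiff_quarticPart : ContDiff ℂ 2 (uncurry (quarticPart P Q R S T B1 B2 B3)) := by
  unfold uncurry quarticPart
  fun_prop

theorem quadraticPart_smul_smul (c : ℂ) (ξ η : Fin 3 → ℂ) :
    quadraticPart (c • ξ) (c • η) = c ^ 2 * quadraticPart ξ η := by
  simp only [quadraticPart, Pi.smul_apply, smul_eq_mul]
  ring

theorem cubicPart_smul_smul (c : ℂ) (ξ η : Fin 3 → ℂ) :
    cubicPart m A1 A2 (c • ξ) (c • η) = c ^ 3 * cubicPart m A1 A2 ξ η := by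
  simp only [cubicPart, Pi.smul_apply, smul_eq_mul, Fin.sum_univ_two]
  ring

theorem quarticPart_smul_smul (c : ℂ) (ξ η : Fin 3 → ℂ) :
    quarticPart P Q R S T B1 B2 B3 (c • ξ) (c • η) =
      c ^ 4 * quarticPart P Q R S T B1 B2 B3 ξ η := by
  simp only [quarticPart, Pi.smul_apply, smul_eq_mul, Fin.sum_univ_two]
  ring

theorem mixedHess_quadraticPart (ξ η : Fin 3 → ℂ) :
    mixedHess quadraticPart ξ η = !![0, 1, 0; 1, 0, 0; 0, 0, 0] := by
  ext i j
  refine (mixedHess_apply_of_mixed_difference (c₁ := !![0, 1, 0; 1, 0, 0; 0, 0, 0] i j) (c₂ := 0)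
    (c₃ := 0) (contDiff_quadraticPart.differentiable two_ne_zero) fun t s => ?_).trans (by ring)
  fin_cases i <;> fin_cases j <;> simp [quadraticPart]

theorem mixedHess_cubicPart (ξ η : Fin 3 → ℂ) :
    mixedHess (cubicPart m A1 A2) ξ η =
      !![0, 0, 2 * ξ 0 + A1 0 * ξ 2;
        0, 0, 2 * m * ξ 1 + A1 1 * ξ 2;
        2 * η 0 + conj (A1 0) * η 2, 2 * conj m * η 1 + conj (A1 1) * η 2,
          ∑ i, (A1 i * ξ i.castSucc + conj (A1 i) * η i.castSucc)
            + 2 * A2 * ξ 2 + 2 * conj A2 * η 2] := by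
  let c₁ : Matrix (Fin 3) (Fin 3) ℂ :=
    !![0, 0, A1 0 * ξ 2; 0, 0, A1 1 * ξ 2;
      conj (A1 0) * η 2, conj (A1 1) * η 2,
        ∑ i, (A1 i * ξ i.castSucc + conj (A1 i) * η i.castSucc)]
  let c₂ : Matrix (Fin 3) (Fin 3) ℂ := !![0, 0, 1; 0, 0, m; 0, 0, A2]
  let c₃ : Matrix (Fin 3) (Fin 3) ℂ := !![0, 0, 0; 0, 0, 0; 1, conj m, conj A2]
  ext i j
  refine (mixedHess_apply_of_mixed_difference (c₁ := c₁ i j) (c₂ := c₂ i j) (c₃ := c₃ i j)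
    (contDiff_cubicPart.differentiable two_ne_zero) fun t s => ?_).trans ?_
  · fin_cases i <;> fin_cases j <;> simp [cubicPart, c₁, c₂, c₃, Fin.sum_univ_two] <;> ring
  · fin_cases i <;> fin_cases j <;> simp [c₁, c₂, c₃] <;> ring

theorem mixedHess_quarticPart_two_two (ξ η : Fin 3 → ℂ) :
    mixedHess (quarticPart P Q R S T B1 B2 B3) ξ η 2 2 =
      ∑ i, ∑ j, S i j * ξ i.castSucc * η j.castSucc
      + ∑ i, ∑ j, B1 i j * ξ i.castSucc * ξ j.castSucc
      + ∑ i, ∑ j, conj (B1 i j) * η i.castSucc * η j.castSucc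
      + 2 * ((∑ i, B2 i * ξ i.castSucc) + ∑ i, conj (B3 i) * η i.castSucc) * ξ 2
      + 2 * ((∑ i, conj (B2 i) * η i.castSucc) + ∑ i, B3 i * ξ i.castSucc) * η 2 := by
  refine mixedHess_apply_of_mixed_difference
    (contDiff_quarticPart.differentiable two_ne_zero) fun t s => ?_
  have castSucc_ne_two (i : Fin 2) : i.castSucc ≠ 2 := i.castSucc_lt_last.ne
  simp only [quarticPart, update_self, update_of_ne (castSucc_ne_two _)]
  ring

theorem wirtHess_Fc_smul (p : Fin 3 → ℂ) {t : ℝ} (ht : t ≠ 0) :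
    wirtHess (Fc m A1 A2 P Q R S T B1 B2 B3) (t • p) =
      mixedHess quadraticPart p (fun l => conj (p l))
      + (t : ℂ) • mixedHess (cubicPart m A1 A2) p (fun l => conj (p l))
      + (t : ℂ) ^ 2 • mixedHess (quarticPart P Q R S T B1 B2 B3) p (fun l => conj (p l)) := by
  rw [← mixedHess_add_add_smul_smul (ofReal_ne_zero.mpr ht) contDiff_quadraticPart
    contDiff_cubicPart contDiff_quarticPart (quadraticPart_smul_smul _) (cubicPart_smul_smul _)
    (quarticPart_smul_smul _), ← Fc_eq_add]
  have conj_smul : (fun l => conj ((t • p) l)) = (t : ℂ) • fun l => conj (p l) := by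
    ext l
    simp
  change mixedHess _ (t • p) (fun l => conj ((t • p) l)) = _
  rw [conj_smul]
  rfl

theorem corner_relations_of_tendsto
    (hdeg : ∀ p : Fin 3 → ℂ,
      Tendsto (fun t : ℝ =>
          (wirtHess (Fc m A1 A2 P Q R S T B1 B2 B3) (t • p)).det / (t : ℂ) ^ 2)
        (𝓝[≠] (0 : ℝ)) (𝓝 0)) (ξ η : Fin 3 → ℂ) :
    mixedHess (cubicPart m A1 A2) ξ η 2 2 = 0 ∧
    mixedHess (quarticPart P Q R S T B1 B2 B3) ξ η 2 2 =
      mixedHess (cubicPart m A1 A2) ξ η 0 2 * mixedHess (cubicPart m A1 A2) ξ η 2 1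
      + mixedHess (cubicPart m A1 A2) ξ η 1 2 * mixedHess (cubicPart m A1 A2) ξ η 2 0 := by
  have on_conj (p : Fin 3 → ℂ) := by
    refine corner_eq_zero_and_corner_eq_of_tendsto tendsto_ofReal_nhdsNE_zero
      ((hdeg p).congr' ?_)
      (N := mixedHess (cubicPart m A1 A2) p fun l => conj (p l))
      (N' := mixedHess (quarticPart P Q R S T B1 B2 B3) p fun l => conj (p l))
    filter_upwards [self_mem_nhdsWithin] with t ht
    rw [wirtHess_Fc_smul p ht, mixedHess_quadraticPart]
  let N := mixedHess (cubicPart m A1 A2)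
  let N' := mixedHess (quarticPart P Q R S T B1 B2 B3)
  constructor
  · refine eq_zero_of_forall_conj (G := fun ξ η => N ξ η 2 2) ?_ (fun p => (on_conj p).1) ξ η
    simp only [N, uncurry_def, mixedHess_cubicPart, Matrix.of_apply, Matrix.cons_val',
      Matrix.cons_val]
    fun_prop
  · refine sub_eq_zero.mp <| eq_zero_of_forall_conj
      (G := fun ξ η => N' ξ η 2 2 - (N ξ η 0 2 * N ξ η 2 1 + N ξ η 1 2 * N ξ η 2 0)) ?_
      (fun p => sub_eq_zero.mpr (on_conj p).2) ξ η
    simp only [N, N', uncurry_def, mixedHess_cubicPart, mixedHess_quarticPart_two_two,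
      Matrix.of_apply, Matrix.cons_val', Matrix.cons_val]
    fun_prop

theorem eq_zero_of_mixedHess_cubicPart
    (h : ∀ ξ η, mixedHess (cubicPart m A1 A2) ξ η 2 2 = 0) : A1 = 0 ∧ A2 = 0 := by
  have hA (ξ : Fin 3 → ℂ) : A1 0 * ξ 0 + A1 1 * ξ 1 + 2 * A2 * ξ 2 = 0 := by
    simpa [mixedHess_cubicPart, Fin.sum_univ_two] using h ξ 0
  refine ⟨funext fun i => ?_, by simpa using hA ![0, 0, 1]⟩
  fin_cases i
  · simpa using hA ![1, 0, 0]
  · simpa using hA ![0, 1, 0]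

theorem forms_eq_of_mixedHess_quarticPart
    (h : ∀ ξ η, mixedHess (quarticPart P Q R S T B1 B2 B3) ξ η 2 2 =
      4 * (conj m * ξ 0 * η 1 + m * ξ 1 * η 0)) :
    (∀ z : Fin 2 → ℂ, ∑ i, ∑ j, B1 i j * z i * z j = 0) ∧
    (∀ z : Fin 2 → ℂ, ∑ i, B2 i * z i = 0) ∧
    (∀ z : Fin 2 → ℂ, ∑ i, B3 i * z i = 0) ∧
    (∀ z w : Fin 2 → ℂ, ∑ i, ∑ j, S i j * z i * w j
        = 4 * (conj m * z 0 * w 1 + m * z 1 * w 0)) := by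
  have snoc_zero (z : Fin 2 → ℂ) (a : ℂ) : (Fin.snoc z a : Fin 3 → ℂ) 0 = z 0 := rfl
  have snoc_one (z : Fin 2 → ℂ) (a : ℂ) : (Fin.snoc z a : Fin 3 → ℂ) 1 = z 1 := rfl
  have snoc_two (z : Fin 2 → ℂ) (a : ℂ) : (Fin.snoc z a : Fin 3 → ℂ) 2 = a := rfl
  have expanded (z w : Fin 2 → ℂ) (a b : ℂ) := h (Fin.snoc z a) (Fin.snoc w b)
  simp only [mixedHess_quarticPart_two_two, Fin.snoc_castSucc, snoc_zero, snoc_one,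
    snoc_two] at expanded
  have hB1 (z : Fin 2 → ℂ) : ∑ i, ∑ j, B1 i j * z i * z j = 0 := by
    simpa using expanded z 0 0 0
  have hB1_conj (w : Fin 2 → ℂ) : ∑ i, ∑ j, conj (B1 i j) * w i * w j = 0 := by
    simpa using expanded 0 w 0 0
  refine ⟨hB1, fun z => ?_, fun z => ?_, fun z w => ?_⟩
  · simpa [-Fin.sum_univ_two, hB1] using expanded z 0 1 0
  · simpa [-Fin.sum_univ_two, hB1] using expanded z 0 0 1
  · simpa [-Fin.sum_univ_two, hB1, hB1_conj] using expanded z w 0 0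

end NullPair

theorem stmt_2_general (m : ℂ)
    (A1 : Fin 2 → ℂ) (A2 : ℂ)
    (P Q : Fin 2 → Fin 2 → Fin 2 → ℂ) (R : Fin 2 → Fin 2 → ℂ)
    (S : Matrix (Fin 2) (Fin 2) ℂ)
    (T : Fin 2 → Fin 2 → Fin 2 → Fin 2 → ℂ)
    (B1 : Fin 2 → Fin 2 → ℂ) (B2 B3 : Fin 2 → ℂ)
    (hdeg : ∀ p : Fin 3 → ℂ,
      Tendsto (fun t : ℝ =>
          (wirtHess (Fc m A1 A2 P Q R S T B1 B2 B3) (t • p)).det / (t : ℂ) ^ 2)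
        (𝓝[≠] (0 : ℝ)) (𝓝 0)) :
    (∀ z : Fin 2 → ℂ, ∑ i, A1 i * z i = 0) ∧
    A2 = 0 ∧
    (∀ z : Fin 2 → ℂ, ∑ i, ∑ j, B1 i j * z i * z j = 0) ∧
    (∀ z : Fin 2 → ℂ, ∑ i, B2 i * z i = 0) ∧
    (∀ z : Fin 2 → ℂ, ∑ i, B3 i * z i = 0) ∧
    (∀ z : Fin 2 → ℂ, ∑ i, ∑ j, S i j * z i * conj (z j)
        = 4 * (conj m * z 0 * conj (z 1) + m * z 1 * conj (z 0))) := by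
  have corners := corner_relations_of_tendsto hdeg
  obtain ⟨rfl, rfl⟩ := eq_zero_of_mixedHess_cubicPart fun ξ η => (corners ξ η).1
  obtain ⟨hB1, hB2, hB3, hS⟩ := forms_eq_of_mixedHess_quarticPart fun ξ η => by
    rw [(corners ξ η).2]
    simp only [mixedHess_cubicPart, Matrix.of_apply, Matrix.cons_val', Matrix.cons_val,
      Pi.zero_apply, map_zero]
    ring
  exact ⟨by simp, rfl, hB1, hB2, hB3, fun z => hS z fun l => conj (z l)⟩

/-- Lemma 8 (null-pair case): if every homogeneous Taylor component of degree ≤ 2 of the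
determinant of the complex Hessian of `F` vanishes at `0`, then `A₁ = A₂ = B₁ = B₂ = B₃ = 0`
and `S(z, z̄) = 4 (m̄ z₁ z̄₂ + m z₂ z̄₁)`. -/
theorem stmt_2 (m : ℂ)
    (A1 : Fin 2 → ℂ) (A2 : ℂ)
    (P Q : Fin 2 → Fin 2 → Fin 2 → ℂ) (R : Fin 2 → Fin 2 → ℂ)
    (S : Matrix (Fin 2) (Fin 2) ℂ) (hS : S.conjTranspose = S)
    (T : Fin 2 → Fin 2 → Fin 2 → Fin 2 → ℂ)
    (hT : ∀ i j l o, conj (T i j l o) = T l o i j)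
    (B1 : Fin 2 → Fin 2 → ℂ) (B2 B3 : Fin 2 → ℂ)
    (hdeg : ∀ p : Fin 3 → ℂ,
      Tendsto (fun t : ℝ =>
          (wirtHess (Fc m A1 A2 P Q R S T B1 B2 B3) (t • p)).det / (t : ℂ) ^ 2)
        (𝓝[≠] (0 : ℝ)) (𝓝 0)) :
    (∀ z : Fin 2 → ℂ, ∑ i, A1 i * z i = 0) ∧
    A2 = 0 ∧
    (∀ z : Fin 2 → ℂ, ∑ i, ∑ j, B1 i j * z i * z j = 0) ∧
    (∀ z : Fin 2 → ℂ, ∑ i, B2 i * z i = 0) ∧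
    (∀ z : Fin 2 → ℂ, ∑ i, B3 i * z i = 0) ∧
    (∀ z : Fin 2 → ℂ, ∑ i, ∑ j, S i j * z i * conj (z j)
        = 4 * (conj m * z 0 * conj (z 1) + m * z 1 * conj (z 0))) :=
  stmt_2_general m A1 A2 P Q R S T B1 B2 B3 hdeg
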